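/- Let 0 < λ be a real number. For every η with 0 < η < λ, the density of states of the genus-0 KdV soliton condensate, u(μ) = μ/(π·√(λ² − μ²)) on (0, λ), satisfies the nonlinear dispersion relation ∫₀^λ ln((μ + η)/|μ − η|) · μ/(π·√(λ² − μ²)) dμ = η. -/

import Mathlib

/-!
The integrand has an elementary antiderivative. With `r(μ) = √(λ² - μ²)` and `c = √(λ² - η²)`,
integrating by parts against `μ / r = (-r)'` and then integrating `2ηr / (η² - μ²)` shows that
`π` times the integrand is the derivative, on `(0, λ) \ {η}`, of

`G(μ) = (r - c) log |μ - η| - (r + c) log (μ + η) + 2η arcsin (μ/λ) + 2c log (ηr + cμ)`.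

The logarithmic singularity of `G` at `η` is only apparent, because
`r - c = -(μ - η)(μ + η) / (r + c)` and `x log x` is continuous; hence `G` is continuous on
`[0, λ]`. The integrand is nonnegative, so its integrability on `[0, η]` and on `[η, λ]` follows
from the existence of this primitive, and the fundamental theorem of calculus on the two pieces
gives `(G(λ) - G(0)) / π = η`.
-/

namespace Genus0

/-- `π` times a primitive of the integrand of the dispersion relation, with `c = √(λ² - η²)`.
Since `Real.log x = log |x|`, the first logarithm needs no absolute value. -/
noncomputable def primitive (lam η c μ : ℝ) : ℝ :=
  (√(lam ^ 2 - μ ^ 2) - c) * Real.log (μ - η) - (√(lam ^ 2 - μ ^ 2) + c) * Real.log (μ + η)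
    + 2 * η * Real.arcsin (μ / lam) + 2 * c * Real.log (η * √(lam ^ 2 - μ ^ 2) + c * μ)

/-- The integrand of the dispersion relation. -/
noncomputable def integrand (lam η μ : ℝ) : ℝ :=
  Real.log ((μ + η) / |μ - η|) * (μ / (Real.pi * √(lam ^ 2 - μ ^ 2)))

/-- The vanishing of the non-logarithmic terms in the derivative of `primitive`. -/
lemma rational_identity {r c η μ : ℝ} (hr : 0 < r) (hc : 0 < c) (hη : 0 < η) (hμ : 0 < μ)
    (hne : μ ≠ η) (h : r ^ 2 + μ ^ 2 = c ^ 2 + η ^ 2) :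
    (r - c) / (μ - η) - (r + c) / (μ + η) + 2 * η / r
      + 2 * c * (η * (-μ / r) + c) / (η * r + c * μ) = 0 := by
  have h1 : μ - η ≠ 0 := sub_ne_zero.mpr hne
  have h2 : μ + η ≠ 0 := by positivity
  have h3 : η * r + c * μ ≠ 0 := by positivity
  have e1 : (r - c) / (μ - η) - (r + c) / (μ + η)
      = -2 * (c ^ 2 + η ^ 2) / (η * r + c * μ) := by
    rw [div_sub_div _ _ h1 h2, div_eq_div_iff (mul_ne_zero h1 h2) h3]
    linear_combination 2 * η ^ 2 * h
  rw [e1]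
  field_simp
  ring

lemma hasDerivAt_primitive {lam η c μ : ℝ} (hη0 : 0 < η)
    (hc : 0 < c) (hc2 : c ^ 2 = lam ^ 2 - η ^ 2) (hμ0 : 0 < μ) (hμ : μ < lam) (hne : μ ≠ η) :
    HasDerivAt (primitive lam η c) (Real.pi * integrand lam η μ) μ := by
  have hlam : 0 < lam := hμ0.trans hμ
  have hpos : 0 < lam ^ 2 - μ ^ 2 := by nlinarith
  have hr : 0 < √(lam ^ 2 - μ ^ 2) := Real.sqrt_pos.mpr hpos
  have hr2 : √(lam ^ 2 - μ ^ 2) ^ 2 = lam ^ 2 - μ ^ 2 := Real.sq_sqrt hpos.le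
  have h1 : μ - η ≠ 0 := sub_ne_zero.mpr hne
  have h2 : μ + η ≠ 0 := by positivity
  have h3 : η * √(lam ^ 2 - μ ^ 2) + c * μ ≠ 0 := by positivity
  have hs : HasDerivAt (fun x : ℝ => √(lam ^ 2 - x ^ 2)) (-μ / √(lam ^ 2 - μ ^ 2)) μ := by
    have := (((hasDerivAt_id μ).pow 2).const_sub (lam ^ 2)).sqrt hpos.ne'
    refine this.congr_deriv ?_
    simp
    field_simp
  have hl1 : HasDerivAt (fun x : ℝ => Real.log (x - η)) (1 / (μ - η)) μ :=
    ((hasDerivAt_id μ).sub_const η).log h1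
  have hl2 : HasDerivAt (fun x : ℝ => Real.log (x + η)) (1 / (μ + η)) μ :=
    ((hasDerivAt_id μ).add_const η).log h2
  have hsq : √(1 - (μ / lam) ^ 2) = √(lam ^ 2 - μ ^ 2) / lam := by
    rw [show 1 - (μ / lam) ^ 2 = (lam ^ 2 - μ ^ 2) / lam ^ 2 by field_simp,
      Real.sqrt_div hpos.le, Real.sqrt_sq hlam.le]
  have hq : μ / lam < 1 := (div_lt_one hlam).mpr hμ
  have hq0 : 0 < μ / lam := by positivity
  have ha : HasDerivAt (fun x : ℝ => Real.arcsin (x / lam)) (1 / √(lam ^ 2 - μ ^ 2)) μ := by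
    have := (Real.hasDerivAt_arcsin (x := μ / lam) (by linarith) hq.ne).comp μ
      ((hasDerivAt_id μ).div_const lam)
    refine this.congr_deriv ?_
    rw [hsq]
    field_simp
  have hl3 := ((hs.const_mul η).add ((hasDerivAt_id μ).const_mul c)).log h3
  have key := ((((hs.sub_const c).mul hl1).sub ((hs.add_const c).mul hl2)).add
    (ha.const_mul (2 * η))).add (hl3.const_mul (2 * c))
  refine key.congr_deriv ?_
  have hid := rational_identity hr hc hη0 hμ0 hne (by linarith)
  have hlog : Real.log ((μ + η) / |μ - η|) = Real.log (μ + η) - Real.log (μ - η) := by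
    rw [Real.log_div h2 (abs_ne_zero.mpr h1), Real.log_abs]
  have hpi := Real.pi_pos.ne'
  have hint : Real.pi * integrand lam η μ
      = (Real.log (μ + η) - Real.log (μ - η)) * (μ / √(lam ^ 2 - μ ^ 2)) := by
    rw [integrand, hlog]
    field_simp
  rw [hint]
  simp only [id, Pi.add_apply, mul_one]
  linear_combination hid

lemma continuousOn_primitive {lam η c : ℝ} (hη0 : 0 < η)
    (hlam : 0 < lam) (hc : 0 < c) (hc2 : c ^ 2 = lam ^ 2 - η ^ 2) :
    ContinuousOn (primitive lam η c) (Set.Icc 0 lam) := by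
  have hs : Continuous fun x : ℝ => √(lam ^ 2 - x ^ 2) := by fun_prop
  have hfirst : ContinuousOn (fun μ : ℝ => (√(lam ^ 2 - μ ^ 2) - c) * Real.log (μ - η))
      (Set.Icc 0 lam) := by
    -- Rationalising `r - c` exposes a factor `μ - η` that absorbs the logarithm.
    have hcont : Continuous fun μ : ℝ =>
        -((μ + η) / (√(lam ^ 2 - μ ^ 2) + c)) * ((μ - η) * Real.log (μ - η)) := by
      refine Continuous.mul ?_ (Real.continuous_mul_log.comp (continuous_id.sub continuous_const))
      refine (Continuous.div (by fun_prop) (by fun_prop) fun x => ?_).neg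
      positivity
    refine hcont.continuousOn.congr fun μ hμ => ?_
    have hr2 : √(lam ^ 2 - μ ^ 2) ^ 2 = lam ^ 2 - μ ^ 2 :=
      Real.sq_sqrt (by nlinarith [hμ.1, hμ.2])
    have hne : √(lam ^ 2 - μ ^ 2) + c ≠ 0 := by positivity
    have : √(lam ^ 2 - μ ^ 2) - c = -((μ + η) / (√(lam ^ 2 - μ ^ 2) + c)) * (μ - η) := by
      field_simp
      linear_combination hr2 - hc2
    simp only
    rw [← mul_assoc, ← this]
  refine ((hfirst.sub ?_).add ?_).add ?_
  · refine ContinuousOn.mul (by fun_prop) (ContinuousOn.log (by fun_prop) fun x hx => ?_)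
    have := hx.1
    positivity
  · exact (continuous_const.mul
      (Real.continuous_arcsin.comp (continuous_id.div_const lam))).continuousOn
  · refine continuousOn_const.mul (ContinuousOn.log (by fun_prop) fun x hx => ?_)
    rcases hx.1.eq_or_lt with h | h
    · have : 0 < √(lam ^ 2 - x ^ 2) := Real.sqrt_pos.mpr (by rw [← h]; nlinarith)
      rw [← h] at this ⊢
      positivity
    · positivity

lemma integrand_nonneg {lam η μ : ℝ} (hη0 : 0 < η) (hμ0 : 0 < μ) (hne : μ ≠ η) :
    0 ≤ integrand lam η μ := by
  have h1 : 0 < |μ - η| := abs_pos.mpr (sub_ne_zero.mpr hne)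
  refine mul_nonneg (Real.log_nonneg ?_) (by have := Real.pi_pos; positivity)
  rw [one_le_div h1, abs_le]
  constructor <;> linarith

lemma primitive_zero {lam η c : ℝ} (hlam : 0 < lam) (hη0 : 0 < η) :
    primitive lam η c 0 = 2 * c * Real.log lam := by
  simp only [primitive, ne_eq, OfNat.ofNat_ne_zero, not_false_eq_true, zero_pow, sub_zero,
    Real.sqrt_sq hlam.le, zero_sub, Real.log_neg_eq_log, zero_add, zero_div, Real.arcsin_zero,
    mul_zero, add_zero, Real.log_mul hη0.ne' hlam.ne']
  ring

lemma primitive_right {lam η c : ℝ} (hη0 : 0 < η) (hηlam : η < lam)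
    (hc : 0 < c) (hc2 : c ^ 2 = lam ^ 2 - η ^ 2) :
    primitive lam η c lam = Real.pi * η + 2 * c * Real.log lam := by
  have hlam : 0 < lam := hη0.trans hηlam
  have hlog : 2 * Real.log c = Real.log (lam - η) + Real.log (lam + η) := by
    rw [← Real.log_mul (by linarith) (by linarith),
      show (lam - η) * (lam + η) = c ^ 2 by linarith, Real.log_pow]
    norm_num
  simp only [primitive, sub_self, Real.sqrt_zero, div_self hlam.ne', Real.arcsin_one, mul_zero,
    zero_add, zero_sub, Real.log_mul hc.ne' hlam.ne']
  linear_combination c * hlog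

/-- The fundamental theorem of calculus on an interval whose interior avoids the singularity. -/
lemma piece {lam η c a b : ℝ} (hη0 : 0 < η)
    (hc : 0 < c) (hc2 : c ^ 2 = lam ^ 2 - η ^ 2) (ha : 0 ≤ a) (hab : a ≤ b) (hb : b ≤ lam)
    (hlam : 0 < lam) (hne : ∀ μ ∈ Set.Ioo a b, μ ≠ η) :
    IntervalIntegrable (integrand lam η) MeasureTheory.volume a b ∧
      ∫ μ in a..b, integrand lam η μ
        = Real.pi⁻¹ * primitive lam η c b - Real.pi⁻¹ * primitive lam η c a := by
  have hcont : ContinuousOn (fun μ => Real.pi⁻¹ * primitive lam η c μ) (Set.Icc a b) :=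
    continuousOn_const.mul
      ((continuousOn_primitive hη0 hlam hc hc2).mono (Set.Icc_subset_Icc ha hb))
  have hder : ∀ μ ∈ Set.Ioo a b,
      HasDerivAt (fun μ => Real.pi⁻¹ * primitive lam η c μ) (integrand lam η μ) μ := by
    intro μ hμ
    refine ((hasDerivAt_primitive hη0 hc hc2 (ha.trans_lt hμ.1) (hμ.2.trans_le hb)
      (hne μ hμ)).const_mul Real.pi⁻¹).congr_deriv ?_
    rw [inv_mul_cancel_left₀ Real.pi_pos.ne']
  have hint : IntervalIntegrable (integrand lam η) MeasureTheory.volume a b := by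
    rw [intervalIntegrable_iff_integrableOn_Ioc_of_le hab]
    exact intervalIntegral.integrableOn_deriv_of_nonneg hcont hder
      fun μ hμ => integrand_nonneg hη0 (ha.trans_lt hμ.1) (hne μ hμ)
  exact ⟨hint, intervalIntegral.integral_eq_sub_of_hasDerivAt_of_le hab hcont hder hint⟩

end Genus0

/-- Genus-0 KdV soliton condensate NDR for the density of states:
for `0 < η < λ`, `∫₀^λ ln((μ+η)/|μ-η|) · μ/(π√(λ²-μ²)) dμ = η`. -/
theorem genus0_condensate_NDR_u (lam η : ℝ) (hlam : 0 < lam)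
    (hη0 : 0 < η) (hηlam : η < lam) :
    ∫ μ in (0:ℝ)..lam,
      Real.log ((μ + η) / |μ - η|) * (μ / (Real.pi * Real.sqrt (lam ^ 2 - μ ^ 2))) = η := by
  have hpos : 0 < lam ^ 2 - η ^ 2 := by nlinarith
  have hc : 0 < √(lam ^ 2 - η ^ 2) := Real.sqrt_pos.mpr hpos
  have hc2 : √(lam ^ 2 - η ^ 2) ^ 2 = lam ^ 2 - η ^ 2 := Real.sq_sqrt hpos.le
  obtain ⟨i1, e1⟩ := Genus0.piece hη0 hc hc2 le_rfl hη0.le hηlam.le hlam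
    fun μ hμ => hμ.2.ne
  obtain ⟨i2, e2⟩ := Genus0.piece hη0 hc hc2 hη0.le hηlam.le le_rfl hlam
    fun μ hμ => hμ.1.ne'
  change ∫ μ in (0:ℝ)..lam, Genus0.integrand lam η μ = η
  rw [← intervalIntegral.integral_add_adjacent_intervals i1 i2, e1, e2,
    Genus0.primitive_zero hlam hη0, Genus0.primitive_right hη0 hηlam hc hc2]
  have hpi := Real.pi_pos.ne'
  field_simp
  ring
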